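/- There exists a universal constant C ∈ (0,∞) such that for every Hilbert space H and every n ∈ ℕ, every smooth compactly supported function f:ℝ^n→H satisfies (∫_{ℝ^n} ∫_0^∞ fint_{x+tB^n} ‖f(y) − Taylor¹_x(H_{t²/n}f)(y)‖_H² dy dt/t³ dx)^{1/2} ≤ C·(fint_{S^{n−1}} ‖σ·∇f‖_{L_2(ℝ^n;H)}² dσ)^{1/2}. -/

import Mathlib

open MeasureTheory Metric Set ENNReal

noncomputable section

universe u

/-- The heat kernel `h_t(x) = (4πt)^{-n/2} e^{-|x|²/(4t)}` on `ℝⁿ`. -/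
def heatKernel (n : ℕ) (t : ℝ) (x : EuclideanSpace ℝ (Fin n)) : ℝ :=
  (4 * Real.pi * t) ^ (-(n : ℝ) / 2) * Real.exp (-‖x‖ ^ 2 / (4 * t))

/-- The heat evolute `H_t f = h_t ∗ f`. -/
def heat {n : ℕ} {Y : Type*} [NormedAddCommGroup Y] [NormedSpace ℝ Y]
    (t : ℝ) (f : EuclideanSpace ℝ (Fin n) → Y) (x : EuclideanSpace ℝ (Fin n)) : Y :=
  ∫ z, heatKernel n t z • f (x - z)

/-- The first-order Taylor polynomial `Taylor¹_x(g)(y) = g(x) + (y-x)·∇g(x)`. -/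
def taylor1 {n : ℕ} {Y : Type*} [NormedAddCommGroup Y] [NormedSpace ℝ Y]
    (g : EuclideanSpace ℝ (Fin n) → Y) (x y : EuclideanSpace ℝ (Fin n)) : Y :=
  g x + ∑ j, (y - x) j • fderiv ℝ g x (EuclideanSpace.single j 1)

/-- The directional derivative `(z·∇)f = Σ_j z_j ∂_j f`. -/
def dirDeriv {n : ℕ} {Y : Type*} [NormedAddCommGroup Y] [NormedSpace ℝ Y]
    (z : EuclideanSpace ℝ (Fin n)) (f : EuclideanSpace ℝ (Fin n) → Y)
    (y : EuclideanSpace ℝ (Fin n)) : Y :=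
  ∑ j, z j • fderiv ℝ f y (EuclideanSpace.single j 1)

/-!
By the Fourier transform, `F ↦ F (· + z) - Taylor¹(H_s F)(· + z)` is the multiplier with symbol
`e^{iθ} - (1 + iθ) e^{-ρ}`, where `θ = 2π⟪ξ, z⟫` and `ρ = 4π² s |ξ|²`. For `s = t² / n` and `z`
uniform in the ball of radius `t`, isometry invariance of `z` yields `E θ² ≤ ρ` and `E θ⁴ ≤ 3 ρ²`:
the factor `1 / n` gained by averaging over directions is exactly the one in the heat time, which
is why no constant depends on the dimension. Hence the mean square of the symbol is at most
`28 min(ρ², 1)`. Writing `ρ = b t²` with `b = 4π² |ξ|² / n`, the integral of `min(b² t⁴, 1)`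
against `dt / t³` is `b`, while by Plancherel the spherical average of `‖σ · ∇F‖²` is `∫ b |F̂|²`.
A real Hilbert space embeds isometrically into a complex one, where Plancherel applies.
-/

section NormPow

variable {V : Type*} [NormedAddCommGroup V] [MeasurableSpace V] {μ : Measure V}

lemma integrable_norm_pow_of_ae_norm_le_one [OpensMeasurableSpace V] [IsFiniteMeasure μ]
    (h : ∀ᵐ z ∂μ, ‖z‖ ≤ 1) (k : ℕ) : Integrable (fun z => ‖z‖ ^ k) μ :=
  Integrable.of_bound (by fun_prop) 1 <| h.mono fun z hz => by
    simpa using pow_le_one₀ (norm_nonneg z) hz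

lemma integral_norm_pow_le_one [IsProbabilityMeasure μ] (h : ∀ᵐ z ∂μ, ‖z‖ ≤ 1) (k : ℕ) :
    ∫ z, ‖z‖ ^ k ∂μ ≤ 1 := by
  have hle := integral_mono_of_nonneg (ae_of_all _ fun z => by positivity) (integrable_const 1)
    (h.mono fun z hz => pow_le_one₀ (norm_nonneg z) hz : (fun z => ‖z‖ ^ k) ≤ᵐ[μ] fun _ => 1)
  simpa using hle

end NormPow

section IsometryInvariant

variable {V : Type*} [NormedAddCommGroup V] [InnerProductSpace ℝ V]

lemma exists_linearIsometryEquiv_inner_eq {v w : V} (h : ‖v‖ = ‖w‖) :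
    ∃ R : V ≃ₗᵢ[ℝ] V, ∀ z, inner ℝ (R z) w = inner ℝ z v := by
  refine ⟨(ℝ ∙ (v - w))ᗮ.reflection, fun z => ?_⟩
  simpa only [Submodule.reflection_sub h] using
    LinearIsometryEquiv.inner_map_map (ℝ ∙ (v - w))ᗮ.reflection z v

variable [MeasurableSpace V] [BorelSpace V] {μ : Measure V}

section Integrable

variable [SecondCountableTopology V]

lemma integrable_inner_sq_mul_inner_sq (h : Integrable (fun z => ‖z‖ ^ 4) μ) (v w : V) :
    Integrable (fun z => inner ℝ z v ^ 2 * inner ℝ z w ^ 2) μ := by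
  refine (h.mul_const (‖v‖ ^ 2 * ‖w‖ ^ 2)).mono' (by fun_prop) (ae_of_all _ fun z => ?_)
  have hv := abs_real_inner_le_norm z v
  have hw := abs_real_inner_le_norm z w
  calc ‖inner ℝ z v ^ 2 * inner ℝ z w ^ 2‖
      = |inner ℝ z v| ^ 2 * |inner ℝ z w| ^ 2 := by simp
    _ ≤ (‖z‖ * ‖v‖) ^ 2 * (‖z‖ * ‖w‖) ^ 2 := by gcongr
    _ = ‖z‖ ^ 4 * (‖v‖ ^ 2 * ‖w‖ ^ 2) := by ring

lemma integrable_inner_sq (h : Integrable (fun z => ‖z‖ ^ 2) μ) (v : V) :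
    Integrable (fun z => inner ℝ z v ^ 2) μ := by
  refine (h.mul_const (‖v‖ ^ 2)).mono' (by fun_prop) (ae_of_all _ fun z => ?_)
  have hv := abs_real_inner_le_norm z v
  calc ‖inner ℝ z v ^ 2‖ = |inner ℝ z v| ^ 2 := by simp
    _ ≤ (‖z‖ * ‖v‖) ^ 2 := by gcongr
    _ = ‖z‖ ^ 2 * ‖v‖ ^ 2 := by ring

lemma integrable_inner_pow_four (h : Integrable (fun z => ‖z‖ ^ 4) μ) (v : V) :
    Integrable (fun z => inner ℝ z v ^ 4) μ := by
  simpa only [← pow_add] using integrable_inner_sq_mul_inner_sq h v v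

end Integrable

/-- A measure on `V` is isometry-invariant if every linear isometry of `V` preserves it. The notion
treats the uniform measures on the unit ball and on the unit sphere on the same footing. -/
def IsIsometryInvariant (μ : Measure V) : Prop :=
  ∀ R : V ≃ₗᵢ[ℝ] V, MeasurePreserving R μ μ

namespace IsIsometryInvariant

lemma integral_inner_pow_congr (hμ : IsIsometryInvariant μ) (k : ℕ) {v w : V} (h : ‖v‖ = ‖w‖) :
    ∫ z, inner ℝ z v ^ k ∂μ = ∫ z, inner ℝ z w ^ k ∂μ := by
  obtain ⟨R, hR⟩ := exists_linearIsometryEquiv_inner_eq h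
  simpa only [hR] using
    (hμ R).integral_comp R.toHomeomorph.measurableEmbedding (fun z => inner ℝ z w ^ k)

lemma integral_inner_pow_eq (hμ : IsIsometryInvariant μ) (k : ℕ) (v : V) {e : V} (he : ‖e‖ = 1) :
    ∫ z, inner ℝ z v ^ k ∂μ = ‖v‖ ^ k * ∫ z, inner ℝ z e ^ k ∂μ := by
  have h : ‖v‖ = ‖‖v‖ • e‖ := by simp [norm_smul, he]
  rw [hμ.integral_inner_pow_congr k h, ← integral_const_mul]
  simp only [inner_smul_right, mul_pow]

variable [SecondCountableTopology V]

/-- Polarisation: `u + w` and `u - w` both have norm `√2 ‖u‖`, and the odd terms cancel in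
`⟪z, u + w⟫⁴ + ⟪z, u - w⟫⁴`. -/
lemma three_mul_integral_inner_sq_mul_inner_sq (hμ : IsIsometryInvariant μ)
    (h4 : Integrable (fun z => ‖z‖ ^ 4) μ) {u w : V} (huw : inner ℝ u w = 0) (hu : ‖u‖ = 1)
    (hw : ‖w‖ = 1) :
    3 * ∫ z, inner ℝ z u ^ 2 * inner ℝ z w ^ 2 ∂μ = ∫ z, inner ℝ z u ^ 4 ∂μ := by
  have hint := integrable_inner_sq_mul_inner_sq h4
  have hint4 := integrable_inner_pow_four h4
  have hexpand : ∫ z, inner ℝ z (u + w) ^ 4 ∂μ + ∫ z, inner ℝ z (u - w) ^ 4 ∂μ =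
      2 * ∫ z, inner ℝ z u ^ 4 ∂μ + 12 * ∫ z, inner ℝ z u ^ 2 * inner ℝ z w ^ 2 ∂μ
        + 2 * ∫ z, inner ℝ z w ^ 4 ∂μ := by
    rw [← integral_add (hint4 _) (hint4 _), ← integral_const_mul, ← integral_const_mul,
      ← integral_const_mul, ← integral_add ((hint4 u).const_mul _) ((hint u w).const_mul _),
      ← integral_add (((hint4 u).const_mul _).fun_add ((hint u w).const_mul _))
        ((hint4 w).const_mul _)]
    congr with z
    rw [inner_add_right, inner_sub_right]
    ring
  have hadd : ‖u + w‖ ^ 4 = 4 := by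
    rw [show ‖u + w‖ ^ 4 = (‖u + w‖ ^ 2) ^ 2 by ring, norm_add_sq_real, huw, hu, hw]; norm_num
  have hsub : ‖u - w‖ ^ 4 = 4 := by
    rw [show ‖u - w‖ ^ 4 = (‖u - w‖ ^ 2) ^ 2 by ring, norm_sub_sq_real, huw, hu, hw]; norm_num
  rw [hμ.integral_inner_pow_eq 4 (u + w) hu, hμ.integral_inner_pow_eq 4 (u - w) hu,
    hμ.integral_inner_pow_congr 4 (hw.trans hu.symm), hadd, hsub] at hexpand
  linarith

variable [FiniteDimensional ℝ V]

open Module in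
lemma finrank_mul_integral_inner_sq (hμ : IsIsometryInvariant μ)
    (h2 : Integrable (fun z => ‖z‖ ^ 2) μ) (v : V) :
    finrank ℝ V * ∫ z, inner ℝ z v ^ 2 ∂μ = ‖v‖ ^ 2 * ∫ z, ‖z‖ ^ 2 ∂μ := by
  let b := stdOrthonormalBasis ℝ V
  calc finrank ℝ V * ∫ z, inner ℝ z v ^ 2 ∂μ
      = ∑ i, ‖v‖ ^ 2 * ∫ z, inner ℝ z (b i) ^ 2 ∂μ := by
        simp [← hμ.integral_inner_pow_eq 2 v (b.norm_eq_one _)]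
    _ = ‖v‖ ^ 2 * ∫ z, ‖z‖ ^ 2 ∂μ := by
        rw [← Finset.mul_sum, ← integral_finsetSum _ fun i _ => integrable_inner_sq h2 (b i)]
        simp only [b.sum_sq_inner_left]

open Module in
lemma finrank_mul_integral_inner_pow_four (hμ : IsIsometryInvariant μ)
    (h4 : Integrable (fun z => ‖z‖ ^ 4) μ) (v : V) :
    finrank ℝ V * (finrank ℝ V + 2) * ∫ z, inner ℝ z v ^ 4 ∂μ
      = 3 * ‖v‖ ^ 4 * ∫ z, ‖z‖ ^ 4 ∂μ := by
  classical
  let b := stdOrthonormalBasis ℝ V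
  set M := ∫ z, inner ℝ z v ^ 4 ∂μ with hM
  have hterm (i j) : 3 * ‖v‖ ^ 4 * ∫ z, inner ℝ z (b i) ^ 2 * inner ℝ z (b j) ^ 2 ∂μ
      = M + if i = j then 2 * M else 0 := by
    rw [hM, hμ.integral_inner_pow_eq 4 v (b.norm_eq_one i)]
    split_ifs with hij
    · subst hij
      simp only [← pow_add]
      ring
    · rw [← hμ.three_mul_integral_inner_sq_mul_inner_sq h4 (b.inner_eq_zero hij)
        (b.norm_eq_one i) (b.norm_eq_one j)]
      ring
  have hnorm : ∫ z, ‖z‖ ^ 4 ∂μ = ∑ i, ∑ j, ∫ z, inner ℝ z (b i) ^ 2 * inner ℝ z (b j) ^ 2 ∂μ := by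
    have hint i j := integrable_inner_sq_mul_inner_sq h4 (b i) (b j)
    simp only [← integral_finsetSum _ fun j _ => hint _ j]
    rw [← integral_finsetSum _ fun i _ => integrable_finsetSum _ fun j _ => hint i j]
    simp only [← Finset.sum_mul_sum, b.sum_sq_inner_left, ← pow_add]
  calc finrank ℝ V * (finrank ℝ V + 2) * M
      = ∑ i, ∑ j, 3 * ‖v‖ ^ 4 * ∫ z, inner ℝ z (b i) ^ 2 * inner ℝ z (b j) ^ 2 ∂μ := by
        simp only [hterm, Finset.sum_add_distrib, Finset.sum_ite_eq, Finset.mem_univ, if_true,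
          Finset.sum_const, Finset.card_univ, Fintype.card_fin, nsmul_eq_mul]
        ring
    _ = 3 * ‖v‖ ^ 4 * ∫ z, ‖z‖ ^ 4 ∂μ := by simp only [hnorm, Finset.mul_sum]

open Module in
lemma integral_inner_sq_le [IsProbabilityMeasure μ] (hμ : IsIsometryInvariant μ)
    (h1 : ∀ᵐ z ∂μ, ‖z‖ ≤ 1) (v : V) :
    ∫ z, inner ℝ z v ^ 2 ∂μ ≤ ‖v‖ ^ 2 / finrank ℝ V := by
  rcases eq_or_ne v 0 with rfl | hv
  · simp
  have hn : (0 : ℝ) < finrank ℝ V := mod_cast finrank_pos_iff_exists_ne_zero.2 ⟨v, hv⟩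
  have hint := integrable_norm_pow_of_ae_norm_le_one h1 2
  have hle : ∫ z, ‖z‖ ^ 2 ∂μ ≤ 1 := integral_norm_pow_le_one h1 2
  rw [le_div_iff₀ hn, mul_comm, hμ.finrank_mul_integral_inner_sq hint v]
  exact mul_le_of_le_one_right (by positivity) hle

open Module in
lemma integral_inner_pow_four_le [IsProbabilityMeasure μ] (hμ : IsIsometryInvariant μ)
    (h1 : ∀ᵐ z ∂μ, ‖z‖ ≤ 1) (v : V) :
    ∫ z, inner ℝ z v ^ 4 ∂μ ≤ 3 * (‖v‖ ^ 2 / finrank ℝ V) ^ 2 := by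
  rcases eq_or_ne v 0 with rfl | hv
  · simp
  have hn : (0 : ℝ) < finrank ℝ V := mod_cast finrank_pos_iff_exists_ne_zero.2 ⟨v, hv⟩
  have hint := integrable_norm_pow_of_ae_norm_le_one h1 4
  have hle : ∫ z, ‖z‖ ^ 4 ∂μ ≤ 1 := integral_norm_pow_le_one h1 4
  have hnonneg : 0 ≤ ∫ z, inner ℝ z v ^ 4 ∂μ := integral_nonneg fun z => by positivity
  rw [div_pow, ← mul_div_assoc, le_div_iff₀ (by positivity)]
  calc (∫ z, inner ℝ z v ^ 4 ∂μ) * (finrank ℝ V : ℝ) ^ 2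
      ≤ finrank ℝ V * (finrank ℝ V + 2) * ∫ z, inner ℝ z v ^ 4 ∂μ := by
        nlinarith [mul_nonneg hn.le hnonneg]
    _ = 3 * ‖v‖ ^ 4 * ∫ z, ‖z‖ ^ 4 ∂μ := hμ.finrank_mul_integral_inner_pow_four hint v
    _ ≤ 3 * ‖v‖ ^ 4 * 1 := by gcongr
    _ = 3 * (‖v‖ ^ 2) ^ 2 := by ring

end IsIsometryInvariant

section BallAndSphere

variable [FiniteDimensional ℝ V]

open ProbabilityTheory in
lemma isIsometryInvariant_cond_closedBall :
    IsIsometryInvariant ((volume : Measure V)[|closedBall 0 1]) := by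
  intro R
  have h := (R.measurePreserving.restrict_preimage
    (measurableSet_closedBall (x := (0 : V)) (ε := 1))).smul_measure
      (volume (closedBall (0 : V) 1))⁻¹
  rwa [R.preimage_closedBall, map_zero] at h

open scoped Pointwise in
lemma isIsometryInvariant_map_toSphere :
    IsIsometryInvariant ((volume : Measure V).toSphere.map Subtype.val) := by
  intro R
  refine ⟨R.continuous.measurable, ?_⟩
  ext s hs
  have hval : Measurable (Subtype.val : sphere (0 : V) 1 → V) := measurable_subtype_coe
  have hRs : MeasurableSet (R ⁻¹' s) := R.continuous.measurable hs
  have himage (A : Set V) : Subtype.val '' (Subtype.val ⁻¹' A : Set (sphere (0 : V) 1))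
      = sphere 0 1 ∩ A := by simp
  have hcone : Ioo (0 : ℝ) 1 • (sphere (0 : V) 1 ∩ R ⁻¹' s)
      = R ⁻¹' (Ioo (0 : ℝ) 1 • (sphere (0 : V) 1 ∩ s)) := by
    ext z
    simp only [mem_smul, mem_preimage, mem_inter_iff, mem_sphere_zero_iff_norm]
    constructor
    · rintro ⟨r, hr, y, ⟨hy, hys⟩, rfl⟩
      exact ⟨r, hr, R y, ⟨by simpa using hy, hys⟩, (map_smul R r y).symm⟩
    · rintro ⟨r, hr, y, ⟨hy, hys⟩, h⟩
      exact ⟨r, hr, R.symm y, ⟨by simpa using hy, by simpa using hys⟩,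
        by rw [← map_smul, h, R.symm_apply_apply]⟩
  rw [Measure.map_apply R.continuous.measurable hs, Measure.map_apply hval hRs,
    Measure.map_apply hval hs, Measure.toSphere_apply' _ (hval hRs),
    Measure.toSphere_apply' _ (hval hs), himage, himage, hcone,
    R.measurePreserving.measure_preimage_emb R.toHomeomorph.measurableEmbedding]

open Module in
lemma laverage_toSphere_inner_sq (v : V) :
    ⨍⁻ σ : sphere (0 : V) 1, ENNReal.ofReal (inner ℝ (σ : V) v ^ 2) ∂(volume : Measure V).toSphere
      = ENNReal.ofReal (‖v‖ ^ 2 / finrank ℝ V) := by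
  rcases eq_or_ne v 0 with rfl | hv
  · simp
  have hn : (0 : ℝ) < finrank ℝ V := mod_cast finrank_pos_iff_exists_ne_zero.2 ⟨v, hv⟩
  have : Nontrivial V := ⟨v, 0, hv⟩
  set μ := (volume : Measure V).toSphere
  have hμ0 : μ univ ≠ 0 := Measure.measure_univ_ne_zero.2 (Measure.toSphere_ne_zero _)
  have hmap {g : V → ℝ} (hg : Continuous g) : ∫ z, g z ∂(μ.map Subtype.val) = ∫ σ, g σ ∂μ :=
    integral_map measurable_subtype_coe.aemeasurable hg.aestronglyMeasurable
  have hone : ∀ᵐ z ∂(μ.map Subtype.val), ‖z‖ ≤ 1 := by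
    refine (ae_map_iff measurable_subtype_coe.aemeasurable ?_).2 (ae_of_all _ fun σ => by simp)
    exact (isClosed_le continuous_norm continuous_const).measurableSet
  have hint := integrable_norm_pow_of_ae_norm_le_one hone 2
  have hmoment : ∫ σ : sphere (0 : V) 1, inner ℝ (σ : V) v ^ 2 ∂μ
      = ‖v‖ ^ 2 / finrank ℝ V * μ.real univ := by
    have h := isIsometryInvariant_map_toSphere.finrank_mul_integral_inner_sq hint v
    rw [hmap (by fun_prop), hmap (by fun_prop)] at h
    simp only [norm_eq_of_mem_sphere, one_pow, integral_const, smul_eq_mul, mul_one] at h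
    rw [div_mul_eq_mul_div, eq_div_iff hn.ne', mul_comm, h]
  rw [laverage_eq, ← ofReal_integral_eq_lintegral_ofReal _ (ae_of_all _ fun σ => sq_nonneg _),
    hmoment, ENNReal.ofReal_mul (by positivity), ofReal_measureReal,
    ENNReal.mul_div_cancel_right hμ0 (measure_ne_top _ _)]
  have hcont : Continuous fun σ : sphere (0 : V) 1 => inner ℝ (σ : V) v ^ 2 := by fun_prop
  exact hcont.integrable_of_hasCompactSupport (HasCompactSupport.of_compactSpace _)

end BallAndSphere

end IsometryInvariant

section RemainderSymbol

open Complex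

lemma norm_cexp_mul_I_sub_one_sub_le (θ : ℝ) : ‖cexp (θ * I) - 1 - θ * I‖ ≤ 2 * θ ^ 2 := by
  have hnorm : ‖(θ : ℂ) * I‖ = |θ| := by simp
  rw [← sq_abs]
  rcases le_or_gt |θ| 1 with hθ | hθ
  · have h := norm_exp_sub_one_sub_id_le (x := θ * I) (hnorm.trans_le hθ)
    rw [hnorm] at h
    linarith [sq_nonneg |θ|]
  · calc ‖cexp (θ * I) - 1 - θ * I‖ ≤ ‖cexp (I * θ) - 1‖ + ‖(θ : ℂ) * I‖ := by
          rw [mul_comm I]; exact norm_sub_le _ _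
      _ ≤ |θ| + |θ| := add_le_add (Real.norm_exp_I_mul_ofReal_sub_one_le (x := θ)) hnorm.le
      _ ≤ 2 * |θ| ^ 2 := by nlinarith

/-- The symbol of `F ↦ F (· + z) - Taylor¹(H_s F)(· + z)`, where `θ = 2π⟪ξ, z⟫` is the phase of the
translation and `ρ = 4π²s|ξ|²` the exponent of the heat semigroup. -/
def remainderSymbol (θ ρ : ℝ) : ℂ :=
  cexp (θ * I) - (1 + θ * I) * Real.exp (-ρ)

lemma norm_one_add_ofReal_mul_I_sq (θ : ℝ) : ‖(1 : ℂ) + θ * I‖ ^ 2 = 1 + θ ^ 2 := by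
  rw [← Complex.ofReal_one, Complex.norm_add_mul_I, Real.sq_sqrt (by positivity), one_pow]

lemma norm_remainderSymbol_sq_le (θ : ℝ) {ρ : ℝ} (hρ : 0 ≤ ρ) :
    ‖remainderSymbol θ ρ‖ ^ 2 ≤ 8 * θ ^ 4 + 2 * ((1 + θ ^ 2) * ρ ^ 2) := by
  have hsplit : remainderSymbol θ ρ
      = (cexp (θ * I) - 1 - θ * I) + (1 + θ * I) * ((1 - Real.exp (-ρ) : ℝ) : ℂ) := by
    rw [remainderSymbol]; push_cast; ring
  have hexp : |1 - Real.exp (-ρ)| ≤ ρ := by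
    rw [abs_of_nonneg (by simpa using hρ)]
    linarith [Real.add_one_le_exp (-ρ)]
  calc ‖remainderSymbol θ ρ‖ ^ 2
      ≤ (‖cexp (θ * I) - 1 - θ * I‖ + ‖(1 : ℂ) + θ * I‖ * |1 - Real.exp (-ρ)|) ^ 2 := by
        rw [hsplit, ← Real.norm_eq_abs, ← Complex.norm_real, ← norm_mul]
        gcongr
        exact norm_add_le _ _
    _ ≤ (2 * θ ^ 2 + ‖(1 : ℂ) + θ * I‖ * ρ) ^ 2 := by
        gcongr
        exact norm_cexp_mul_I_sub_one_sub_le θ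
    _ ≤ 2 * ((2 * θ ^ 2) ^ 2 + (‖(1 : ℂ) + θ * I‖ * ρ) ^ 2) := add_sq_le
    _ = 8 * θ ^ 4 + 2 * ((1 + θ ^ 2) * ρ ^ 2) := by
        rw [mul_pow ‖_‖, norm_one_add_ofReal_mul_I_sq]; ring

lemma norm_remainderSymbol_sq_le_exp (θ ρ : ℝ) :
    ‖remainderSymbol θ ρ‖ ^ 2 ≤ 2 * (1 + (1 + θ ^ 2) * Real.exp (-ρ) ^ 2) := by
  calc ‖remainderSymbol θ ρ‖ ^ 2 ≤ (1 + ‖(1 : ℂ) + θ * I‖ * Real.exp (-ρ)) ^ 2 := by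
        gcongr
        refine (norm_sub_le _ _).trans_eq ?_
        rw [norm_exp_ofReal_mul_I, norm_mul, norm_real, Real.norm_of_nonneg (Real.exp_nonneg _)]
    _ ≤ 2 * (1 ^ 2 + (‖(1 : ℂ) + θ * I‖ * Real.exp (-ρ)) ^ 2) := add_sq_le
    _ = 2 * (1 + (1 + θ ^ 2) * Real.exp (-ρ) ^ 2) := by
        rw [mul_pow, norm_one_add_ofReal_mul_I_sq, one_pow]

lemma lintegral_enorm_sq_le_ofReal_integral {Ω E : Type*} [MeasurableSpace Ω]
    [SeminormedAddGroup E] {P : Measure Ω} {f : Ω → E} {g : Ω → ℝ} (hg : Integrable g P)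
    (hle : ∀ ω, ‖f ω‖ ^ 2 ≤ g ω) : ∫⁻ ω, ‖f ω‖ₑ ^ 2 ∂P ≤ ENNReal.ofReal (∫ ω, g ω ∂P) := by
  rw [ofReal_integral_eq_lintegral_ofReal hg (ae_of_all _ fun ω => (sq_nonneg _).trans (hle ω))]
  refine lintegral_mono fun ω => ?_
  rw [← ofReal_norm, ← ENNReal.ofReal_pow (norm_nonneg _)]
  exact ENNReal.ofReal_le_ofReal (hle ω)

lemma one_add_mul_exp_neg_le_one (ρ : ℝ) : (1 + ρ) * Real.exp (-ρ) ≤ 1 := by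
  rw [Real.exp_neg, ← div_eq_mul_inv, div_le_one (Real.exp_pos _), add_comm]
  exact Real.add_one_le_exp ρ

lemma lintegral_enorm_remainderSymbol_sq_le {Ω : Type*} [MeasurableSpace Ω] {P : Measure Ω}
    [IsProbabilityMeasure P] {θ : Ω → ℝ} {ρ : ℝ} (hρ : 0 ≤ ρ)
    (hint2 : Integrable (fun ω => θ ω ^ 2) P) (hint4 : Integrable (fun ω => θ ω ^ 4) P)
    (h2 : ∫ ω, θ ω ^ 2 ∂P ≤ ρ) (h4 : ∫ ω, θ ω ^ 4 ∂P ≤ 3 * ρ ^ 2) :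
    ∫⁻ ω, ‖remainderSymbol (θ ω) ρ‖ₑ ^ 2 ∂P ≤ ENNReal.ofReal (28 * min (ρ ^ 2) 1) := by
  have hint : Integrable (fun ω => 1 + θ ω ^ 2) P := (integrable_const 1).fun_add hint2
  have hmean : ∫ ω, (1 + θ ω ^ 2) ∂P ≤ 1 + ρ := by
    rw [integral_add (integrable_const 1) hint2]
    simpa using h2
  rcases le_total ρ 1 with hρ1 | hρ1
  · refine (lintegral_enorm_sq_le_ofReal_integral
      ((hint4.const_mul 8).fun_add ((hint.mul_const (ρ ^ 2)).const_mul 2))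
      fun ω => norm_remainderSymbol_sq_le (θ ω) hρ).trans (ENNReal.ofReal_le_ofReal ?_)
    rw [integral_add (hint4.const_mul 8) ((hint.mul_const _).const_mul 2), integral_const_mul,
      integral_const_mul, integral_mul_const, min_eq_left (by nlinarith)]
    -- `8 θ⁴ + 2 (1 + θ²) ρ²` has mean at most `24 ρ² + 2 (1 + ρ) ρ² ≤ 28 ρ²`
    nlinarith [sq_nonneg ρ]
  · refine (lintegral_enorm_sq_le_ofReal_integral
      (((integrable_const 1).fun_add (hint.mul_const (Real.exp (-ρ) ^ 2))).const_mul 2)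
      fun ω => norm_remainderSymbol_sq_le_exp (θ ω) ρ).trans (ENNReal.ofReal_le_ofReal ?_)
    have hprod : (∫ ω, (1 + θ ω ^ 2) ∂P) * Real.exp (-ρ) ^ 2 ≤ 1 := by
      calc (∫ ω, (1 + θ ω ^ 2) ∂P) * Real.exp (-ρ) ^ 2
          ≤ (1 + ρ) * Real.exp (-ρ) * Real.exp (-ρ) := by rw [mul_assoc, ← sq]; gcongr
        _ ≤ 1 * 1 := by
            gcongr
            · exact one_add_mul_exp_neg_le_one ρ
            · exact Real.exp_le_one_iff.2 (neg_nonpos.2 hρ)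
        _ = 1 := one_mul 1
    rw [integral_const_mul, integral_add (integrable_const 1) (hint.mul_const _),
      integral_mul_const, integral_const, probReal_univ, min_eq_right (by nlinarith)]
    simp only [smul_eq_mul]
    linarith

end RemainderSymbol

section TimeMeasure

/-- The measure `dt / t³` on `(0, ∞)`. -/
def timeMeasure : Measure ℝ :=
  (volume.restrict (Ioi 0)).withDensity fun t => (ENNReal.ofReal (t ^ 3))⁻¹

lemma lintegral_timeMeasure {g : ℝ → ℝ≥0∞} :
    ∫⁻ t, g t ∂timeMeasure = ∫⁻ t in Ioi 0, g t / ENNReal.ofReal (t ^ 3) := by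
  rw [timeMeasure, lintegral_withDensity_eq_lintegral_mul_non_measurable₀ _ (by fun_prop)]
  · simp only [Pi.mul_apply, div_eq_mul_inv, mul_comm]
  · filter_upwards [ae_restrict_mem measurableSet_Ioi] with t (ht : 0 < t)
    simpa using pow_pos ht 3

instance : SFinite timeMeasure := by
  unfold timeMeasure; infer_instance

lemma setLIntegral_Ioc_sq_mul {b c : ℝ} (hc : 0 ≤ c) (h : b * c ^ 2 = 1) :
    ∫⁻ t in Ioc 0 c, ENNReal.ofReal (b ^ 2 * t) = ENNReal.ofReal (b / 2) := by
  rw [← ofReal_integral_eq_lintegral_ofReal]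
  · rw [integral_const_mul, ← intervalIntegral.integral_of_le hc, integral_id]
    congr 1
    linear_combination b / 2 * h
  · exact (continuous_const.mul continuous_id).integrableOn_Ioc
  · filter_upwards [ae_restrict_mem measurableSet_Ioc] with t ht
    exact mul_nonneg (sq_nonneg b) ht.1.le

lemma setLIntegral_Ioi_rpow_neg_three {b c : ℝ} (hc : 0 < c) (h : b * c ^ 2 = 1) :
    ∫⁻ t in Ioi c, ENNReal.ofReal (t ^ (-3 : ℝ)) = ENNReal.ofReal (b / 2) := by
  rw [← ofReal_integral_eq_lintegral_ofReal (integrableOn_Ioi_rpow_of_lt (by norm_num) hc),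
    integral_Ioi_rpow_of_lt (by norm_num) hc]
  · have hb : c ^ (-3 + 1 : ℝ) = b := by
      rw [show (-3 + 1 : ℝ) = -2 by norm_num, Real.rpow_neg hc.le, Real.rpow_two]
      exact inv_eq_of_mul_eq_one_left h
    rw [hb]
    norm_num
  · filter_upwards [ae_restrict_mem measurableSet_Ioi] with t (ht : c < t)
    exact Real.rpow_nonneg (hc.trans ht).le _

lemma lintegral_timeMeasure_min_sq {b : ℝ} (hb : 0 ≤ b) :
    ∫⁻ t, ENNReal.ofReal (min ((b * t ^ 2) ^ 2) 1) ∂timeMeasure = ENNReal.ofReal b := by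
  rcases hb.eq_or_lt with rfl | hb
  · simp
  obtain ⟨c, hc, hbc⟩ : ∃ c : ℝ, 0 < c ∧ b * c ^ 2 = 1 :=
    ⟨(√b)⁻¹, by positivity, by rw [inv_pow, Real.sq_sqrt hb.le, mul_inv_cancel₀ hb.ne']⟩
  have hsmall : ∀ t ∈ Ioc 0 c, ENNReal.ofReal (min ((b * t ^ 2) ^ 2) 1) / ENNReal.ofReal (t ^ 3)
      = ENNReal.ofReal (b ^ 2 * t) := by
    rintro t ⟨ht, htc⟩
    have hle : b * t ^ 2 ≤ 1 := hbc ▸ by gcongr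
    rw [min_eq_left (pow_le_one₀ (by positivity) hle), ← ENNReal.ofReal_div_of_pos (by positivity)]
    congr 1
    field_simp
  have hlarge : ∀ t ∈ Ioi c, ENNReal.ofReal (min ((b * t ^ 2) ^ 2) 1) / ENNReal.ofReal (t ^ 3)
      = ENNReal.ofReal (t ^ (-3 : ℝ)) := by
    intro t (hct : c < t)
    have ht : 0 < t := hc.trans hct
    have hle : 1 ≤ b * t ^ 2 := hbc ▸ by gcongr
    rw [min_eq_right (one_le_pow₀ hle), ← ENNReal.ofReal_div_of_pos (by positivity),
      Real.rpow_neg ht.le, one_div]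
    norm_cast
  rw [lintegral_timeMeasure, ← Ioc_union_Ioi_eq_Ioi hc.le,
    lintegral_union measurableSet_Ioi (Ioc_disjoint_Ioi le_rfl),
    setLIntegral_congr_fun measurableSet_Ioc hsmall,
    setLIntegral_congr_fun measurableSet_Ioi hlarge, setLIntegral_Ioc_sq_mul hc.le hbc,
    setLIntegral_Ioi_rpow_neg_three hc hbc,
    ← ENNReal.ofReal_add (by positivity) (by positivity), add_halves]

end TimeMeasure

section TemperateGrowth

open Complex

lemma iteratedDeriv_cexp_mul_ofReal (c : ℂ) (k : ℕ) :
    iteratedDeriv k (fun u : ℝ => cexp (c * u)) = fun u : ℝ => c ^ k * cexp (c * u) := by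
  induction k with
  | zero => simp
  | succ k ih =>
    ext u
    have hderiv : HasDerivAt (fun u : ℝ => cexp (c * u)) (cexp (c * u) * c) u := by
      simpa using ((hasDerivAt_id (u : ℂ)).const_mul c).cexp.comp_ofReal
    rw [iteratedDeriv_succ, ih, (hderiv.const_mul (c ^ k)).deriv]
    ring

lemma hasTemperateGrowth_cexp_mul_ofReal {V : Type*} [NormedAddCommGroup V] [NormedSpace ℝ V]
    {f : V → ℝ} (hf : f.HasTemperateGrowth) (c : ℂ) {M : ℝ} (hM : ∀ ξ, (c * f ξ).re ≤ M) :
    (fun ξ => cexp (c * f ξ)).HasTemperateGrowth := by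
  let t : Set ℝ := {u | (c * u).re < M + 1}
  have ht : IsOpen t := isOpen_lt (by fun_prop) continuous_const
  have hsmooth : ContDiff ℝ (⊤ : ℕ∞) (fun u : ℝ => cexp (c * u)) :=
    (contDiff_const.mul ofRealCLM.contDiff).cexp
  refine Function.HasTemperateGrowth.comp' (g := fun u : ℝ => cexp (c * u)) (t := t) ?_
    ht.uniqueDiffOn hsmooth.contDiffOn (fun N => ?_) hf
  · rintro _ ⟨ξ, rfl⟩
    exact (hM ξ).trans_lt (lt_add_one M)
  · refine ⟨0, (1 + ‖c‖) ^ N * Real.exp (M + 1), by positivity, fun k hk u hu => ?_⟩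
    rw [iteratedFDerivWithin_of_isOpen _ ht hu, norm_iteratedFDeriv_eq_norm_iteratedDeriv,
      iteratedDeriv_cexp_mul_ofReal, norm_mul, norm_pow, norm_exp, pow_zero, mul_one]
    gcongr
    · calc ‖c‖ ^ k ≤ (1 + ‖c‖) ^ k := by gcongr; linarith
        _ ≤ (1 + ‖c‖) ^ N := pow_le_pow_right₀ (by linarith [norm_nonneg c]) hk
    · exact le_of_lt hu

variable {V : Type*} [NormedAddCommGroup V] [InnerProductSpace ℝ V]

lemma hasTemperateGrowth_cexp_inner_mul_I (z : V) :
    (fun ξ : V => cexp ((2 * Real.pi * inner ℝ ξ z : ℝ) * I)).HasTemperateGrowth := by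
  have h : (fun ξ : V => 2 * Real.pi * inner ℝ ξ z).HasTemperateGrowth := by fun_prop
  simpa only [mul_comm I] using hasTemperateGrowth_cexp_mul_ofReal h I (M := 0) fun ξ => by simp

lemma hasTemperateGrowth_ofReal_exp_neg {f : V → ℝ} (hf : f.HasTemperateGrowth)
    (hf0 : ∀ ξ, 0 ≤ f ξ) : (fun ξ => (Real.exp (-f ξ) : ℂ)).HasTemperateGrowth := by
  simpa using hasTemperateGrowth_cexp_mul_ofReal hf (-1) (M := 0) fun ξ => by simpa using hf0 ξ

lemma hasTemperateGrowth_ofReal_comp {f : V → ℝ} (hf : f.HasTemperateGrowth) :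
    (fun ξ => (f ξ : ℂ)).HasTemperateGrowth :=
  Function.Complex.hasTemperateGrowth_ofReal.comp hf

lemma hasTemperateGrowth_inner_mul_I (z : V) :
    (fun ξ : V => (2 * Real.pi * inner ℝ ξ z : ℝ) * I).HasTemperateGrowth :=
  (hasTemperateGrowth_ofReal_comp (by fun_prop)).mul (.const I)

end TemperateGrowth

section FourierMultiplier

open SchwartzMap FourierTransform Complex
open scoped LineDeriv

variable {V : Type*} [NormedAddCommGroup V] [InnerProductSpace ℝ V] [FiniteDimensional ℝ V]
  [MeasurableSpace V] [BorelSpace V]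
variable {E : Type*} [NormedAddCommGroup E]

section NormedSpace

variable [NormedSpace ℂ E] {g : V → ℂ}

lemma fourierMultiplierCLM_apply_eq_integral (hg : g.HasTemperateGrowth) (F : 𝓢(V, E)) (x : V) :
    fourierMultiplierCLM E g F x
      = ∫ ξ, cexp ((2 * Real.pi * inner ℝ ξ x : ℝ) * I) • g ξ • 𝓕 F ξ := by
  rw [fourierMultiplierCLM_apply, SchwartzMap.fourierInv_coe, Real.fourierInv_eq']
  simp only [smulLeftCLM_apply_apply hg]

lemma fourierMultiplierCLM_sub {g₁ g₂ : V → ℂ} (h₁ : g₁.HasTemperateGrowth)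
    (h₂ : g₂.HasTemperateGrowth) :
    fourierMultiplierCLM E (g₁ - g₂) = fourierMultiplierCLM E g₁ - fourierMultiplierCLM E g₂ := by
  ext1 F
  rw [sub_apply, fourierMultiplierCLM_apply, fourierMultiplierCLM_apply,
    fourierMultiplierCLM_apply, smulLeftCLM_sub h₁ h₂, sub_apply]
  exact map_sub (fourierInvCLM ℂ 𝓢(V, E)) _ _

lemma fourierMultiplierCLM_cexp_inner_apply [CompleteSpace E] (z : V) (F : 𝓢(V, E)) (x : V) :
    fourierMultiplierCLM E (fun ξ => cexp ((2 * Real.pi * inner ℝ ξ z : ℝ) * I)) F x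
      = F (x + z) := by
  have hF : F = fourierMultiplierCLM E (fun _ : V => (1 : ℂ)) F := by
    simp [fourierMultiplierCLM_const]
  conv_rhs => rw [hF]
  rw [fourierMultiplierCLM_apply_eq_integral (hasTemperateGrowth_cexp_inner_mul_I z),
    fourierMultiplierCLM_apply_eq_integral (.const 1)]
  simp only [smul_smul, ← Complex.exp_add, mul_one, inner_add_right, mul_add, Complex.ofReal_add,
    add_mul]

lemma fderiv_apply_eq_fourierMultiplierCLM [CompleteSpace E] (F : 𝓢(V, E)) (x z : V) :
    fderiv ℝ F x z
      = fourierMultiplierCLM E (fun ξ => (2 * Real.pi * inner ℝ ξ z : ℝ) * I) F x := by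
  have hinner : (fun ξ : V => inner ℝ ξ z).HasTemperateGrowth := by fun_prop
  have hsymbol : (fun ξ : V => (2 * Real.pi * inner ℝ ξ z : ℝ) * I)
      = (2 * Real.pi * I) • fun ξ : V => ((inner ℝ ξ z : ℝ) : ℂ) := by
    ext ξ
    simp only [Pi.smul_apply, smul_eq_mul]
    push_cast
    ring
  have hreal : fourierMultiplierCLM E (fun ξ : V => ((inner ℝ ξ z : ℝ) : ℂ)) F
      = fourierMultiplierCLM E (fun ξ : V => inner ℝ ξ z) F :=
    fourierMultiplierCLM_ofReal ℂ hinner F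
  have hline : fderiv ℝ F x z
      = ((2 * Real.pi * I) • fourierMultiplierCLM E (fun ξ : V => inner ℝ ξ z) F) x := by
    rw [← lineDeriv_eq_fourierMultiplierCLM, lineDerivOp_apply_eq_fderiv]
  rw [hline, hsymbol, fourierMultiplierCLM_smul (hasTemperateGrowth_ofReal_comp hinner),
    smul_apply, smul_apply, smul_apply, hreal]

lemma stronglyMeasurable_fourierMultiplierCLM_apply {P : Type*} [MeasurableSpace P]
    {g : P → V → ℂ} (hgm : Measurable (Function.uncurry g)) (hg : ∀ p, (g p).HasTemperateGrowth)
    (F : 𝓢(V, E)) :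
    StronglyMeasurable fun q : V × P => fourierMultiplierCLM E (g q.2) F q.1 := by
  have hkernel : StronglyMeasurable fun q : (V × P) × V =>
      cexp ((2 * Real.pi * inner ℝ q.2 q.1.1 : ℝ) * I) • g q.1.2 q.2 • 𝓕 F q.2 := by
    refine StronglyMeasurable.smul ?_ (StronglyMeasurable.smul ?_ ?_)
    · fun_prop
    · have hswap : Measurable fun q : (V × P) × V => (q.1.2, q.2) := by fun_prop
      exact (hgm.comp hswap).stronglyMeasurable
    · exact (𝓕 F).continuous.stronglyMeasurable.comp_measurable measurable_snd
  simpa only [fourierMultiplierCLM_apply_eq_integral (hg _)] using hkernel.integral_prod_right'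

end NormedSpace

section Plancherel

variable [InnerProductSpace ℂ E]

lemma lintegral_enorm_sq_eq_ofReal_integral (F : 𝓢(V, E)) :
    ∫⁻ x, ‖F x‖ₑ ^ 2 = ENNReal.ofReal (∫ x, ‖F x‖ ^ 2) := by
  have hint : Integrable (fun x => ‖F x‖ ^ 2) :=
    (memLp_two_iff_integrable_sq_norm F.integrable.aestronglyMeasurable).1 (F.memLp 2)
  rw [ofReal_integral_eq_lintegral_ofReal hint (ae_of_all _ fun x => sq_nonneg _)]
  simp only [ENNReal.ofReal_pow (norm_nonneg _), ofReal_norm]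

variable [CompleteSpace E]

lemma lintegral_enorm_fourierMultiplierCLM_sq {g : V → ℂ} (hg : g.HasTemperateGrowth)
    (F : 𝓢(V, E)) :
    ∫⁻ x, ‖fourierMultiplierCLM E g F x‖ₑ ^ 2 = ∫⁻ ξ, ‖g ξ‖ₑ ^ 2 * ‖𝓕 F ξ‖ₑ ^ 2 := by
  rw [fourierMultiplierCLM_apply, lintegral_enorm_sq_eq_ofReal_integral,
    ← integral_norm_sq_fourier, FourierTransform.fourier_fourierInv_eq,
    ← lintegral_enorm_sq_eq_ofReal_integral]
  simp only [smulLeftCLM_apply_apply hg, enorm_smul, mul_pow]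

lemma lintegral_lintegral_enorm_fourierMultiplierCLM_sq {P : Type*} [MeasurableSpace P]
    {π : Measure P} [SFinite π] {g : P → V → ℂ} (hgm : Measurable (Function.uncurry g))
    (hg : ∀ p, (g p).HasTemperateGrowth) (F : 𝓢(V, E)) :
    ∫⁻ p, ∫⁻ x, ‖fourierMultiplierCLM E (g p) F x‖ₑ ^ 2 ∂volume ∂π
      = ∫⁻ ξ, (∫⁻ p, ‖g p ξ‖ₑ ^ 2 ∂π) * ‖𝓕 F ξ‖ₑ ^ 2 := by
  have hF : Measurable fun ξ => ‖𝓕 F ξ‖ₑ := (𝓕 F).continuous.enorm.measurable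
  simp only [lintegral_enorm_fourierMultiplierCLM_sq (hg _)]
  rw [lintegral_lintegral_swap (((hgm.enorm.pow_const 2).mul
    ((hF.comp measurable_snd).pow_const 2)).aemeasurable)]
  refine lintegral_congr fun ξ => lintegral_mul_const _ ?_
  exact (hgm.comp measurable_prodMk_right).enorm.pow_const 2

end Plancherel

end FourierMultiplier

section Heat

open SchwartzMap FourierTransform Complex

variable {n : ℕ}

lemma sum_smul_fderiv_single {Y : Type*} [NormedAddCommGroup Y] [NormedSpace ℝ Y]
    (g : EuclideanSpace ℝ (Fin n) → Y) (x z : EuclideanSpace ℝ (Fin n)) :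
    ∑ j, z j • fderiv ℝ g x (EuclideanSpace.single j 1) = fderiv ℝ g x z := by
  have hz : ∑ j, z j • EuclideanSpace.single j (1 : ℝ) = z := by
    simpa using (EuclideanSpace.basisFun (Fin n) ℝ).sum_repr z
  simp only [← map_smul, ← map_sum, hz]

lemma taylor1_eq_add_fderiv {Y : Type*} [NormedAddCommGroup Y] [NormedSpace ℝ Y]
    (g : EuclideanSpace ℝ (Fin n) → Y) (x y : EuclideanSpace ℝ (Fin n)) :
    taylor1 g x y = g x + fderiv ℝ g x (y - x) :=
  congrArg (g x + ·) (sum_smul_fderiv_single g x (y - x))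

lemma dirDeriv_eq_fderiv {Y : Type*} [NormedAddCommGroup Y] [NormedSpace ℝ Y]
    (z : EuclideanSpace ℝ (Fin n)) (f : EuclideanSpace ℝ (Fin n) → Y)
    (y : EuclideanSpace ℝ (Fin n)) : dirDeriv z f y = fderiv ℝ f y z :=
  sum_smul_fderiv_single f y z

lemma fourier_gaussian_eq_heatKernel {s : ℝ} (hs : 0 < s) (x w : EuclideanSpace ℝ (Fin n)) :
    𝓕 (fun v => cexp (-((4 * Real.pi ^ 2 * s : ℝ) : ℂ) * ‖v‖ ^ 2
      + 2 * Real.pi * I * (inner ℝ x v : ℝ))) w = heatKernel n s (x - w) := by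
  have hb : 0 < ((4 * Real.pi ^ 2 * s : ℝ) : ℂ).re := by rw [ofReal_re]; positivity
  have hpi : (Real.pi : ℂ) ≠ 0 := by exact_mod_cast Real.pi_ne_zero
  have hs0 : (s : ℂ) ≠ 0 := by exact_mod_cast hs.ne'
  have hprefactor : ((Real.pi : ℂ) / (4 * Real.pi ^ 2 * s : ℝ)) ^ ((n : ℂ) / 2)
      = ((4 * Real.pi * s : ℝ) ^ (-(n : ℝ) / 2) : ℝ) := by
    have hbase : (Real.pi : ℂ) / (4 * Real.pi ^ 2 * s : ℝ) = ((4 * Real.pi * s)⁻¹ : ℝ) := by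
      push_cast
      field_simp
    have hexp : (n : ℂ) / 2 = (n / 2 : ℝ) := by push_cast; rfl
    rw [hbase, hexp, ← ofReal_cpow (by positivity), Real.inv_rpow (by positivity), neg_div,
      Real.rpow_neg (by positivity)]
  have hexponent : -(Real.pi : ℂ) ^ 2 * ‖x - w‖ ^ 2 / (4 * Real.pi ^ 2 * s : ℝ)
      = (-‖x - w‖ ^ 2 / (4 * s) : ℝ) := by
    push_cast
    field_simp
  rw [fourier_gaussian_innerProductSpace' hb x w, finrank_euclideanSpace_fin, hprefactor,
    hexponent, heatKernel, Complex.ofReal_mul, ofReal_exp]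

variable {V : Type*} [NormedAddCommGroup V] [InnerProductSpace ℝ V]

lemma hasTemperateGrowth_gaussian {s : ℝ} (hs : 0 ≤ s) :
    (fun ξ : V => (Real.exp (-(4 * Real.pi ^ 2 * s * ‖ξ‖ ^ 2)) : ℂ)).HasTemperateGrowth :=
  hasTemperateGrowth_ofReal_exp_neg (by fun_prop) fun ξ => by positivity

lemma remainderSymbol_gaussian_eq (s : ℝ) (z : V) :
    (fun ξ => remainderSymbol (2 * Real.pi * inner ℝ ξ z) (4 * Real.pi ^ 2 * s * ‖ξ‖ ^ 2))
      = (fun ξ => cexp ((2 * Real.pi * inner ℝ ξ z : ℝ) * I))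
        - (fun ξ => (Real.exp (-(4 * Real.pi ^ 2 * s * ‖ξ‖ ^ 2)) : ℂ))
        - (fun ξ => (2 * Real.pi * inner ℝ ξ z : ℝ) * I)
          * fun ξ => (Real.exp (-(4 * Real.pi ^ 2 * s * ‖ξ‖ ^ 2)) : ℂ) := by
  ext ξ
  simp only [remainderSymbol, Pi.sub_apply, Pi.mul_apply]
  ring

lemma hasTemperateGrowth_remainderSymbol {s : ℝ} (hs : 0 ≤ s) (z : V) :
    (fun ξ => remainderSymbol (2 * Real.pi * inner ℝ ξ z)
      (4 * Real.pi ^ 2 * s * ‖ξ‖ ^ 2)).HasTemperateGrowth := by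
  rw [remainderSymbol_gaussian_eq]
  exact ((hasTemperateGrowth_cexp_inner_mul_I z).sub (hasTemperateGrowth_gaussian hs)).sub
    ((hasTemperateGrowth_inner_mul_I z).mul (hasTemperateGrowth_gaussian hs))

variable {E : Type*} [NormedAddCommGroup E] [NormedSpace ℂ E] [CompleteSpace E]

lemma integral_fourier_smul_eq_integral_smul_fourier {V : Type*} [NormedAddCommGroup V]
    [InnerProductSpace ℝ V] [FiniteDimensional ℝ V] [MeasurableSpace V] [BorelSpace V]
    {f : V → ℂ} {g : V → E} (hf : Integrable f) (hg : Integrable g) :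
    ∫ x, 𝓕 f x • g x = ∫ x, f x • 𝓕 g x := by
  simpa using! VectorFourier.integral_fourierIntegral_smul_eq_flip (L := innerₗ V)
    Real.continuous_fourierChar continuous_inner hf hg

lemma heat_eq_fourierMultiplierCLM {s : ℝ} (hs : 0 < s) (F : 𝓢(EuclideanSpace ℝ (Fin n), E)) :
    heat s F = fourierMultiplierCLM E
      (fun ξ => (Real.exp (-(4 * Real.pi ^ 2 * s * ‖ξ‖ ^ 2)) : ℂ)) F := by
  ext x
  have hb : 0 < ((4 * Real.pi ^ 2 * s : ℝ) : ℂ).re := by rw [ofReal_re]; positivity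
  have hint := GaussianFourier.integrable_cexp_neg_mul_sq_norm_add hb (2 * Real.pi * I) x
  calc heat s F x = ∫ w, (heatKernel n s (x - w) : ℂ) • F w := by
        rw [heat, ← integral_sub_left_eq_self (fun z => heatKernel n s z • F (x - z)) _ x]
        simp only [_root_.sub_sub_cancel, Complex.coe_smul]
    _ = ∫ v, cexp (-((4 * Real.pi ^ 2 * s : ℝ) : ℂ) * ‖v‖ ^ 2
          + 2 * Real.pi * I * (inner ℝ x v : ℝ)) • 𝓕 (F : EuclideanSpace ℝ (Fin n) → E) v := by
        simp only [← integral_fourier_smul_eq_integral_smul_fourier hint F.integrable,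
          fourier_gaussian_eq_heatKernel hs]
    _ = fourierMultiplierCLM E
          (fun ξ => (Real.exp (-(4 * Real.pi ^ 2 * s * ‖ξ‖ ^ 2)) : ℂ)) F x := by
        rw [fourierMultiplierCLM_apply_eq_integral (hasTemperateGrowth_gaussian hs.le)]
        refine integral_congr_ae (ae_of_all _ fun ξ => ?_)
        simp only [smul_smul, ofReal_exp, ← Complex.exp_add, real_inner_comm x ξ, fourier_coe]
        congr 2
        push_cast
        ring

lemma sub_taylor1_heat_eq_fourierMultiplierCLM {s : ℝ} (hs : 0 < s)
    (F : 𝓢(EuclideanSpace ℝ (Fin n), E)) (x z : EuclideanSpace ℝ (Fin n)) :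
    F (x + z) - taylor1 (heat s F) x (x + z) = fourierMultiplierCLM E (fun ξ =>
      remainderSymbol (2 * Real.pi * inner ℝ ξ z) (4 * Real.pi ^ 2 * s * ‖ξ‖ ^ 2)) F x := by
  have hexp := hasTemperateGrowth_cexp_inner_mul_I z
  have hlin := hasTemperateGrowth_inner_mul_I z
  have hgauss := hasTemperateGrowth_gaussian (V := EuclideanSpace ℝ (Fin n)) hs.le
  rw [taylor1_eq_add_fderiv, heat_eq_fourierMultiplierCLM hs, add_sub_cancel_left,
    fderiv_apply_eq_fourierMultiplierCLM,
    fourierMultiplierCLM_fourierMultiplierCLM_apply hlin hgauss, remainderSymbol_gaussian_eq,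
    fourierMultiplierCLM_sub (hexp.sub hgauss) (hlin.mul hgauss),
    fourierMultiplierCLM_sub hexp hgauss, sub_apply, sub_apply, sub_apply, sub_apply,
    fourierMultiplierCLM_cexp_inner_apply, sub_sub]

end Heat

section MeanSquare

open SchwartzMap FourierTransform Module ProbabilityTheory

variable {V : Type*} [NormedAddCommGroup V] [InnerProductSpace ℝ V] [FiniteDimensional ℝ V]
  [MeasurableSpace V] [BorelSpace V]

lemma setLIntegral_closedBall_div_volume {t : ℝ} (ht : 0 < t) (x : V) (φ : V → ℝ≥0∞) :
    (∫⁻ y in closedBall x t, φ y) / volume (closedBall x t)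
      = ∫⁻ u, φ (x + t • u) ∂(volume : Measure V)[|closedBall 0 1] := by
  have hpreimage : (fun u : V => x + t • u) ⁻¹' closedBall x t = closedBall 0 1 := by
    ext u
    simp [norm_smul, abs_of_pos ht, ht]
  have hemb : MeasurableEmbedding fun u : V => x + t • u :=
    (measurableEmbedding_addLeft x).comp (Homeomorph.smulOfNeZero t ht.ne').measurableEmbedding
  have hmap : (volume : Measure V).map (fun u => x + t • u)
      = ENNReal.ofReal |(t ^ finrank ℝ V)⁻¹| • volume := by
    change (volume : Measure V).map ((x + ·) ∘ (t • ·)) = _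
    rw [← Measure.map_map (by fun_prop) (by fun_prop), Measure.map_addHaar_smul _ ht.ne',
      Measure.map_smul, map_add_left_eq_self]
  have hscale (ψ : V → ℝ≥0∞) : ∫⁻ u in closedBall 0 1, ψ (x + t • u)
      = ENNReal.ofReal |(t ^ finrank ℝ V)⁻¹| * ∫⁻ y in closedBall x t, ψ y := by
    rw [← hpreimage, ← hemb.lintegral_map ψ, ← hemb.restrict_map, hmap, Measure.restrict_smul,
      lintegral_smul_measure, smul_eq_mul]
  have hvolume := hscale 1
  simp only [Pi.one_apply, setLIntegral_one] at hvolume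
  rw [ProbabilityTheory.cond, lintegral_smul_measure, hscale, hvolume, smul_eq_mul, mul_comm,
    ← div_eq_mul_inv, ENNReal.mul_div_mul_left _ _
      (ENNReal.ofReal_pos.2 (by positivity)).ne' ENNReal.ofReal_ne_top]

lemma lintegral_lintegral_enorm_remainderSymbol_sq_le (ξ : V) :
    ∫⁻ t, ∫⁻ u, ‖remainderSymbol (2 * Real.pi * inner ℝ ξ (t • u))
        (4 * Real.pi ^ 2 * (t ^ 2 / finrank ℝ V) * ‖ξ‖ ^ 2)‖ₑ ^ 2
        ∂(volume : Measure V)[|closedBall 0 1] ∂timeMeasure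
      ≤ ENNReal.ofReal 28 * ENNReal.ofReal (4 * Real.pi ^ 2 * ‖ξ‖ ^ 2 / finrank ℝ V) := by
  set P := (volume : Measure V)[|closedBall 0 1]
  have : IsProbabilityMeasure P := cond_isProbabilityMeasure_of_finite
    (measure_closedBall_pos volume 0 one_pos).ne' measure_closedBall_lt_top.ne
  have hP : ∀ᵐ u ∂P, ‖u‖ ≤ 1 := by
    filter_upwards [ae_cond_mem measurableSet_closedBall] with u hu
    simpa using hu
  set b := 4 * Real.pi ^ 2 * ‖ξ‖ ^ 2 / finrank ℝ V with hb
  have hslice (t : ℝ) : ∫⁻ u, ‖remainderSymbol (2 * Real.pi * inner ℝ ξ (t • u))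
        (4 * Real.pi ^ 2 * (t ^ 2 / finrank ℝ V) * ‖ξ‖ ^ 2)‖ₑ ^ 2 ∂P
      ≤ ENNReal.ofReal (28 * min ((b * t ^ 2) ^ 2) 1) := by
    set v := (2 * Real.pi * t) • ξ with hv
    have hθ (u : V) : 2 * Real.pi * inner ℝ ξ (t • u) = inner ℝ u v := by
      rw [hv, inner_smul_right, inner_smul_right, real_inner_comm]
      ring
    have hρ : ‖v‖ ^ 2 / finrank ℝ V = b * t ^ 2 := by
      rw [hv, norm_smul, mul_pow, Real.norm_eq_abs, sq_abs, hb]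
      ring
    rw [show 4 * Real.pi ^ 2 * (t ^ 2 / finrank ℝ V) * ‖ξ‖ ^ 2 = b * t ^ 2 by rw [hb]; ring]
    simp only [hθ]
    exact lintegral_enorm_remainderSymbol_sq_le (by positivity)
      (integrable_inner_sq (integrable_norm_pow_of_ae_norm_le_one hP 2) v)
      (integrable_inner_pow_four (integrable_norm_pow_of_ae_norm_le_one hP 4) v)
      (hρ ▸ isIsometryInvariant_cond_closedBall.integral_inner_sq_le hP v)
      (hρ ▸ isIsometryInvariant_cond_closedBall.integral_inner_pow_four_le hP v)
  calc _ ≤ ∫⁻ t, ENNReal.ofReal (28 * min ((b * t ^ 2) ^ 2) 1) ∂timeMeasure :=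
        lintegral_mono hslice
    _ = ENNReal.ofReal 28 * ENNReal.ofReal b := by
        simp only [ENNReal.ofReal_mul (p := 28) (by norm_num)]
        rw [lintegral_const_mul _ (by fun_prop), lintegral_timeMeasure_min_sq (by positivity)]

variable {E : Type*} [NormedAddCommGroup E] [InnerProductSpace ℂ E] [CompleteSpace E]

lemma laverage_lintegral_enorm_fderiv_sq (F : 𝓢(V, E)) :
    ⨍⁻ σ : sphere (0 : V) 1, ∫⁻ x, ‖fderiv ℝ F x σ‖ₑ ^ 2 ∂volume ∂(volume : Measure V).toSphere
      = ∫⁻ ξ, ENNReal.ofReal (4 * Real.pi ^ 2 * ‖ξ‖ ^ 2 / finrank ℝ V) * ‖𝓕 F ξ‖ₑ ^ 2 := by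
  have hsymbol (ξ : V) : ⨍⁻ σ : sphere (0 : V) 1,
      ‖(2 * Real.pi * inner ℝ ξ (σ : V) : ℝ) * Complex.I‖ₑ ^ 2 ∂(volume : Measure V).toSphere
      = ENNReal.ofReal (4 * Real.pi ^ 2 * ‖ξ‖ ^ 2 / finrank ℝ V) := by
    have hnorm (σ : V) : ‖(2 * Real.pi * inner ℝ ξ σ : ℝ) * Complex.I‖ₑ ^ 2
        = ENNReal.ofReal (inner ℝ σ ((2 * Real.pi) • ξ) ^ 2) := by
      rw [← ofReal_norm, ← ENNReal.ofReal_pow (norm_nonneg _), norm_mul, Complex.norm_I, mul_one,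
        Complex.norm_real, Real.norm_eq_abs, sq_abs, inner_smul_right, real_inner_comm]
    simp only [hnorm, laverage_toSphere_inner_sq, norm_smul, mul_pow, Real.norm_eq_abs, sq_abs]
    norm_num
  simp only [fderiv_apply_eq_fourierMultiplierCLM]
  rw [laverage, lintegral_lintegral_enorm_fourierMultiplierCLM_sq
    (g := fun (σ : sphere (0 : V) 1) ξ => (2 * Real.pi * inner ℝ ξ (σ : V) : ℝ) * Complex.I)]
  · exact lintegral_congr fun ξ => congrArg (· * _) (hsymbol ξ)
  · fun_prop
  · exact fun σ => hasTemperateGrowth_inner_mul_I (σ : V)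

end MeanSquare

section Dorronsoro

open SchwartzMap FourierTransform ProbabilityTheory

variable {n : ℕ} {Y : Type*} [NormedAddCommGroup Y] [NormedSpace ℝ Y]

/-- The square of the left-hand side of the Dorronsoro estimate: the mean-square distance on balls
of radius `t` between `f` and the Taylor polynomial of its heat evolute at time `t² / n`,
integrated against `dt / t³` over the scales and against Lebesgue measure over the centres. -/
def heatTaylorDefect (f : EuclideanSpace ℝ (Fin n) → Y) : ℝ≥0∞ :=
  ∫⁻ x, ∫⁻ t in Ioi (0 : ℝ),
    ((∫⁻ y in closedBall x t, ‖f y - taylor1 (heat (t ^ 2 / n) f) x y‖ₑ ^ 2)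
      / volume (closedBall x t)) / ENNReal.ofReal (t ^ 3)

/-- The spherical mean of the squared `L₂` norms of the directional derivatives of `f`. -/
def sphericalDirichletEnergy (f : EuclideanSpace ℝ (Fin n) → Y) : ℝ≥0∞ :=
  ⨍⁻ σ : sphere (0 : EuclideanSpace ℝ (Fin n)) 1,
    ∫⁻ x, ‖dirDeriv (σ : EuclideanSpace ℝ (Fin n)) f x‖ₑ ^ 2 ∂volume
    ∂(volume : Measure (EuclideanSpace ℝ (Fin n))).toSphere

section Complex

variable {E : Type*} [NormedAddCommGroup E] [InnerProductSpace ℂ E] [CompleteSpace E]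

lemma sphericalDirichletEnergy_eq_lintegral_fourier (F : 𝓢(EuclideanSpace ℝ (Fin n), E)) :
    sphericalDirichletEnergy F
      = ∫⁻ ξ, ENNReal.ofReal (4 * Real.pi ^ 2 * ‖ξ‖ ^ 2 / n) * ‖𝓕 F ξ‖ₑ ^ 2 := by
  simpa only [sphericalDirichletEnergy, dirDeriv_eq_fderiv, finrank_euclideanSpace_fin]
    using laverage_lintegral_enorm_fderiv_sq F

lemma setLIntegral_sub_taylor1_heat_div_volume (hn : 0 < n) (F : 𝓢(EuclideanSpace ℝ (Fin n), E))
    (x : EuclideanSpace ℝ (Fin n)) {t : ℝ} (ht : 0 < t) :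
    (∫⁻ y in closedBall x t, ‖F y - taylor1 (heat (t ^ 2 / n) F) x y‖ₑ ^ 2)
        / volume (closedBall x t)
      = ∫⁻ u, ‖fourierMultiplierCLM E (fun ξ => remainderSymbol (2 * Real.pi * inner ℝ ξ (t • u))
          (4 * Real.pi ^ 2 * (t ^ 2 / n) * ‖ξ‖ ^ 2)) F x‖ₑ ^ 2
          ∂(volume : Measure (EuclideanSpace ℝ (Fin n)))[|closedBall 0 1] := by
  rw [setLIntegral_closedBall_div_volume ht]
  simp only [sub_taylor1_heat_eq_fourierMultiplierCLM (show 0 < t ^ 2 / n by positivity)]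

lemma heatTaylorDefect_eq_lintegral_fourier (hn : 0 < n) (F : 𝓢(EuclideanSpace ℝ (Fin n), E)) :
    heatTaylorDefect F
      = ∫⁻ ξ, (∫⁻ t, ∫⁻ u, ‖remainderSymbol (2 * Real.pi * inner ℝ ξ (t • u))
          (4 * Real.pi ^ 2 * (t ^ 2 / n) * ‖ξ‖ ^ 2)‖ₑ ^ 2
          ∂(volume : Measure (EuclideanSpace ℝ (Fin n)))[|closedBall 0 1] ∂timeMeasure)
        * ‖𝓕 F ξ‖ₑ ^ 2 := by
  set P := (volume : Measure (EuclideanSpace ℝ (Fin n)))[|closedBall 0 1]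
  let g (p : ℝ × EuclideanSpace ℝ (Fin n)) (ξ : EuclideanSpace ℝ (Fin n)) : ℂ :=
    remainderSymbol (2 * Real.pi * inner ℝ ξ (p.1 • p.2))
      (4 * Real.pi ^ 2 * (p.1 ^ 2 / n) * ‖ξ‖ ^ 2)
  have hgm : Measurable (Function.uncurry g) := by
    unfold g remainderSymbol Function.uncurry
    fun_prop
  have hg (p) : (g p).HasTemperateGrowth := hasTemperateGrowth_remainderSymbol (by positivity) _
  have hmeas : Measurable
      (Function.uncurry fun x p => ‖fourierMultiplierCLM E (g p) F x‖ₑ ^ 2) :=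
    (stronglyMeasurable_fourierMultiplierCLM_apply hgm hg F).enorm.pow_const 2
  have hscale (x : EuclideanSpace ℝ (Fin n)) : ∫⁻ t in Ioi (0 : ℝ),
      ((∫⁻ y in closedBall x t, ‖F y - taylor1 (heat (t ^ 2 / n) F) x y‖ₑ ^ 2)
        / volume (closedBall x t)) / ENNReal.ofReal (t ^ 3)
      = ∫⁻ p, ‖fourierMultiplierCLM E (g p) F x‖ₑ ^ 2 ∂timeMeasure.prod P := by
    rw [lintegral_prod _ hmeas.of_uncurry_left.aemeasurable, lintegral_timeMeasure]
    exact setLIntegral_congr_fun measurableSet_Ioi fun t ht =>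
      congrArg (· / _) (setLIntegral_sub_taylor1_heat_div_volume hn F x ht)
  simp only [heatTaylorDefect, hscale]
  rw [lintegral_lintegral_swap hmeas.aemeasurable,
    lintegral_lintegral_enorm_fourierMultiplierCLM_sq hgm hg]
  refine lintegral_congr fun ξ => ?_
  have hgmξ : Measurable fun p => ‖g p ξ‖ₑ ^ 2 := hgm.of_uncurry_right.enorm.pow_const 2
  rw [lintegral_prod _ hgmξ.aemeasurable]

lemma heatTaylorDefect_le_of_complex (hn : 0 < n) (F : 𝓢(EuclideanSpace ℝ (Fin n), E)) :
    heatTaylorDefect F ≤ ENNReal.ofReal 28 * sphericalDirichletEnergy F := by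
  rw [heatTaylorDefect_eq_lintegral_fourier hn, sphericalDirichletEnergy_eq_lintegral_fourier,
    ← lintegral_const_mul' _ _ ENNReal.ofReal_ne_top]
  refine lintegral_mono fun ξ => ?_
  rw [← mul_assoc]
  gcongr
  simpa only [finrank_euclideanSpace_fin] using lintegral_lintegral_enorm_remainderSymbol_sq_le ξ

end Complex

section LinearIsometry

variable {H K : Type*} [NormedAddCommGroup H] [InnerProductSpace ℝ H] [CompleteSpace H]
  [NormedAddCommGroup K] [InnerProductSpace ℝ K] [CompleteSpace K] (T : H →ₗᵢ[ℝ] K)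
  (f : EuclideanSpace ℝ (Fin n) → H)

lemma fderiv_linearIsometry_comp_apply {V : Type*} [NormedAddCommGroup V] [NormedSpace ℝ V]
    (g : V → H) (x z : V) : fderiv ℝ (T ∘ g) x z = T (fderiv ℝ g x z) := by
  by_cases hg : DifferentiableAt ℝ g x
  · exact congrArg (· z) (T.toContinuousLinearMap.hasFDerivAt.comp x hg.hasFDerivAt).fderiv
  · have hTg : ¬DifferentiableAt ℝ (T ∘ g) x := fun h => hg <| by
      have hleft : g = T.toContinuousLinearMap.adjoint ∘ T ∘ g := by
        have hadjoint := T.toContinuousLinearMap.norm_map_iff_adjoint_comp_self.1 T.norm_map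
        exact funext fun y => (DFunLike.congr_fun hadjoint (g y)).symm
      rw [hleft]
      exact T.toContinuousLinearMap.adjoint.differentiableAt.comp x h
    simp [fderiv_zero_of_not_differentiableAt hg, fderiv_zero_of_not_differentiableAt hTg]

lemma heat_linearIsometry_comp (s : ℝ) : heat s (T ∘ f) = T ∘ heat s f := by
  ext x
  simp only [heat, Function.comp_apply, ← T.integral_comp_comm, map_smul]

lemma heatTaylorDefect_linearIsometry_comp : heatTaylorDefect (T ∘ f) = heatTaylorDefect f := by
  simp only [heatTaylorDefect, heat_linearIsometry_comp, taylor1_eq_add_fderiv,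
    fderiv_linearIsometry_comp_apply, Function.comp_apply, ← map_add, ← map_sub, T.enorm_map]

lemma sphericalDirichletEnergy_linearIsometry_comp :
    sphericalDirichletEnergy (T ∘ f) = sphericalDirichletEnergy f := by
  simp only [sphericalDirichletEnergy, dirDeriv_eq_fderiv, fderiv_linearIsometry_comp_apply,
    T.enorm_map]

end LinearIsometry

section Real

variable {H : Type u} [NormedAddCommGroup H] [InnerProductSpace ℝ H] [CompleteSpace H]

lemma exists_linearIsometry_complex (H : Type u) [NormedAddCommGroup H] [InnerProductSpace ℝ H]
    [CompleteSpace H] : ∃ (E : Type u) (_ : NormedAddCommGroup E) (_ : InnerProductSpace ℂ E)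
      (_ : CompleteSpace E), Nonempty (H →ₗᵢ[ℝ] E) := by
  obtain ⟨ι, b, -⟩ := exists_hilbertBasis ℝ H
  have hmem (x : H) : Memℓp (fun i => (b.repr x i : ℂ)) 2 := by
    have h := lp.memℓp (b.repr x)
    rw [memℓp_gen_iff (by norm_num)] at h ⊢
    simpa using h
  let T : H →ₗ[ℝ] lp (fun _ : ι => ℂ) 2 :=
    { toFun := fun x => ⟨fun i => (b.repr x i : ℂ), hmem x⟩
      map_add' := fun x y => by ext i; simp; rfl
      map_smul' := fun c x => by ext i; simp }
  refine ⟨lp (fun _ : ι => ℂ) 2, inferInstance, inferInstance, inferInstance, ⟨T, fun x => ?_⟩⟩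
  change ‖(⟨fun i => (b.repr x i : ℂ), hmem x⟩ : lp (fun _ : ι => ℂ) 2)‖ = ‖x‖
  rw [← b.repr.norm_map x, lp.norm_eq_tsum_rpow (by norm_num), lp.norm_eq_tsum_rpow (by norm_num)]
  simp

lemma heatTaylorDefect_le (hn : 0 < n) (F : 𝓢(EuclideanSpace ℝ (Fin n), H)) :
    heatTaylorDefect F ≤ ENNReal.ofReal 28 * sphericalDirichletEnergy F := by
  obtain ⟨E, _, _, _, ⟨T⟩⟩ := exists_linearIsometry_complex H
  let : InnerProductSpace ℝ E := InnerProductSpace.complexToReal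
  have hcomplex := heatTaylorDefect_le_of_complex hn (postcompCLM T.toContinuousLinearMap F)
  have hcoe : ⇑(postcompCLM T.toContinuousLinearMap F) = T ∘ F := rfl
  rwa [hcoe, heatTaylorDefect_linearIsometry_comp, sphericalDirichletEnergy_linearIsometry_comp]
    at hcomplex

theorem statement19_general (hn : 0 < n) (F : 𝓢(EuclideanSpace ℝ (Fin n), H)) :
    (∫⁻ x, ∫⁻ t in Ioi (0 : ℝ),
        ((∫⁻ y in closedBall x t,
            (‖F y - taylor1 (heat (t ^ 2 / n) F) x y‖₊ : ℝ≥0∞) ^ (2 : ℝ))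
          / volume (closedBall x t))
          / ENNReal.ofReal (t ^ 3)) ^ ((1 : ℝ) / 2)
      ≤ ENNReal.ofReal 6 *
          ((∫⁻ σ : sphere (0 : EuclideanSpace ℝ (Fin n)) 1,
              eLpNorm (dirDeriv (σ : EuclideanSpace ℝ (Fin n)) F) 2 volume ^ (2 : ℝ)
              ∂((volume : Measure (EuclideanSpace ℝ (Fin n))).toSphere))
            / (volume : Measure (EuclideanSpace ℝ (Fin n))).toSphere univ) ^ ((1 : ℝ) / 2) := by
  have hroot : heatTaylorDefect F ^ ((1 : ℝ) / 2)
      ≤ ENNReal.ofReal 6 * sphericalDirichletEnergy F ^ ((1 : ℝ) / 2) := by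
    rw [one_div, ENNReal.rpow_inv_le_iff two_pos, ENNReal.mul_rpow_of_nonneg _ _ two_pos.le,
      ENNReal.rpow_inv_rpow two_ne_zero, ENNReal.ofReal_rpow_of_pos (by norm_num)]
    refine (heatTaylorDefect_le hn F).trans ?_
    gcongr
    norm_num
  have hL2 (g : EuclideanSpace ℝ (Fin n) → H) :
      eLpNorm g 2 volume ^ (2 : ℝ) = ∫⁻ x, ‖g x‖ₑ ^ 2 := by
    simpa using eLpNorm_nnreal_pow_eq_lintegral (f := g) (μ := volume) two_ne_zero
  simpa only [heatTaylorDefect, sphericalDirichletEnergy, laverage_eq, hL2, ENNReal.rpow_two,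
    enorm_eq_nnnorm] using hroot

end Real

end Dorronsoro

/-- **Corollary (dimension-free Hilbertian Dorronsoro estimate for the heat semigroup).** -/
theorem statement19 :
    ∃ C : ℝ, 0 < C ∧
      ∀ (H : Type u) [NormedAddCommGroup H] [InnerProductSpace ℝ H] [CompleteSpace H],
      ∀ (n : ℕ), 0 < n →
      ∀ f : EuclideanSpace ℝ (Fin n) → H, ContDiff ℝ (⊤ : ℕ∞) f → HasCompactSupport f →
        (∫⁻ x, ∫⁻ t in Set.Ioi (0 : ℝ),
            ((∫⁻ y in closedBall x t,
                (‖f y - taylor1 (heat (t ^ 2 / n) f) x y‖₊ : ℝ≥0∞) ^ (2 : ℝ))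
              / volume (closedBall x t))
              / ENNReal.ofReal (t ^ 3)) ^ ((1 : ℝ) / 2)
          ≤ ENNReal.ofReal C *
              ((∫⁻ σ : sphere (0 : EuclideanSpace ℝ (Fin n)) 1,
                  eLpNorm (dirDeriv (σ : EuclideanSpace ℝ (Fin n)) f) 2 volume ^ (2 : ℝ)
                  ∂((volume : Measure (EuclideanSpace ℝ (Fin n))).toSphere))
                / (volume : Measure (EuclideanSpace ℝ (Fin n))).toSphere Set.univ)
                ^ ((1 : ℝ) / 2) := by
  exact ⟨6, by norm_num, fun H _ _ _ n hn f hf hc => statement19_general hn (hc.toSchwartzMap hf)⟩
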